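/- Let k be a field and G a bipartite graph. Then the edge ideal I of G satisfies the colex lower bound: if J is the unique colexsegment-generated ideal in degree 2 with the same number of minimal generators as I, then β_j(I) ≥ β_j(J) for all j. -/

import Mathlib

open Finset

/-- An abstract simplicial complex on the vertex type `V`: a collection of
finite subsets of `V` (the *faces*) closed under taking subsets. -/
structure SimpComplex (V : Type*) where
  faces : Set (Finset V)
  down_closed : ∀ F ∈ faces, ∀ G ⊆ F, G ∈ faces

namespace SimpComplex

variable {V : Type*}

/-- The induced subcomplex `Γ[W]` of `Γ` on a set `W` of vertices. -/
def induced (K : SimpComplex V) (W : Finset V) : SimpComplex V where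
  faces := {F | F ∈ K.faces ∧ F ⊆ W}
  down_closed := fun F hF G hG => ⟨K.down_closed F hF.1 G hG, hG.trans hF.2⟩

/-- A simplicial complex is a cone with apex `v` if `v` belongs to every
maximal face. -/
def IsConeWithApex (K : SimpComplex V) (v : V) : Prop :=
  ∀ F ∈ K.faces, (∀ G ∈ K.faces, F ⊆ G → G = F) → v ∈ F

variable [LinearOrder V] [Fintype V] (k : Type*) [Field k]

/-- The faces of cardinality `c` of a simplicial complex, as a type. -/
def Face (K : SimpComplex V) (c : ℕ) : Type _ :=
  {F : Finset V // F ∈ K.faces ∧ F.card = c}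

/-- The space of simplicial chains with coefficients in `k` in (reduced)
homological degree `c - 1`; it has a basis indexed by the faces of
cardinality `c`. -/
abbrev Chains (K : SimpComplex V) (c : ℕ) : Type _ := Face K c → k

/-- The simplicial boundary map, from chains on faces of cardinality `c + 1`
to chains on faces of cardinality `c`, expressed in coordinates:  the
coefficient of a face `G` in `∂ x` is a signed sum of the coefficients of
`x` at the faces `G ∪ {v}`, with the usual signs determined by the linear
order on the vertices. -/
noncomputable def boundary (K : SimpComplex V) (c : ℕ) :
    Chains k K (c + 1) →ₗ[k] Chains k K c where
  toFun x G := ∑ v ∈ (Finset.univ \ G.1).attach,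
    letI := Classical.dec (insert v.1 G.1 ∈ K.faces)
    if h : insert v.1 G.1 ∈ K.faces then
      ((-1 : k) ^ (G.1.filter (fun w => w < v.1)).card) *
        x ⟨insert v.1 G.1, h, by
          have hv : v.1 ∉ G.1 := (Finset.mem_sdiff.mp v.2).2
          rw [Finset.card_insert_of_notMem hv, G.2.2]⟩
    else 0
  map_add' x y := by
    funext G
    simp only [Pi.add_apply]
    rw [← Finset.sum_add_distrib]
    refine Finset.sum_congr rfl fun v _ => ?_
    split
    · exact mul_add _ (x _) (y _)
    · simp
  map_smul' a x := by
    funext G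
    simp only [Pi.smul_apply, RingHom.id_apply, smul_eq_mul, Finset.mul_sum]
    refine Finset.sum_congr rfl fun v _ => ?_
    split
    · exact mul_left_comm _ a (x _)
    · simp

/-- The `j`-th reduced simplicial homology `H̃_j(K; k)` (for `j : ℕ`):
cycles supported on faces of cardinality `j + 1` modulo boundaries of chains on
faces of cardinality `j + 2`.  (Note that the empty set is a face of every
nonvoid complex, so this is reduced homology.) -/
@[reducible] noncomputable def reducedHomology (K : SimpComplex V) (j : ℕ) : Type _ :=
  LinearMap.ker (boundary k K j) ⧸
    Submodule.comap (LinearMap.ker (boundary k K j)).subtype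
      (LinearMap.range (boundary k K (j + 1)))

/-- The `j`-th reduced Betti number `β̃_j(K) = dim_k H̃_j(K; k)`. -/
noncomputable def reducedBetti (K : SimpComplex V) (j : ℕ) : ℕ :=
  Module.finrank k (reducedHomology k K j)

/-- Hochster's formula, used as the definition of the fine graded Betti numbers
(graded by squarefree multidegrees, i.e. by subsets `W` of the variables) of
the squarefree monomial ideal `I_K` whose Stanley–Reisner complex is `K`:
`β_{i,W}(I_K) = dim_k H̃_{|W| - i - 2}(K[W]; k)`. -/
noncomputable def bettiFine (K : SimpComplex V) (i : ℕ) (W : Finset V) : ℕ :=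
  if i + 2 ≤ W.card then reducedBetti k (K.induced W) (W.card - i - 2) else 0

/-- The total (ungraded) Betti number `β_i`, the sum of all the fine graded
Betti numbers. -/
noncomputable def totalBetti (K : SimpComplex V) (i : ℕ) : ℕ :=
  ∑ W : Finset V, bettiFine k K i W

end SimpComplex

open SimpComplex

/-- The vertex `x_i` of `X = {x_1, …, x_n}` inside `X ⊔ Y = Fin (n + m)`. -/
def xVert {n m : ℕ} (i : Fin n) : Fin (n + m) := Fin.castAdd m i

/-- The vertex `y_j` of `Y = {y_1, …, y_m}` inside `X ⊔ Y = Fin (n + m)`. -/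
def yVert {n m : ℕ} (j : Fin m) : Fin (n + m) := Fin.natAdd n j

/-- A bipartite graph `G` on `X ⊔ Y` is given by its edge set `E ⊆ X × Y`.
`nbr E i` is the neighborhood `N(x_i) ⊆ Y` of the vertex `x_i` in `G`. -/
def nbr {n m : ℕ} (E : Finset (Fin n × Fin m)) (i : Fin n) : Finset (Fin m) :=
  Finset.univ.filter fun j => (i, j) ∈ E

/-- The degree `deg_G x_i = |N(x_i)|`. -/
def degG {n m : ℕ} (E : Finset (Fin n × Fin m)) (i : Fin n) : ℕ := (nbr E i).card

/-- The Ferrers graph `H` associated to the bipartite graph `E`: the vertex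
`x_i` is joined to exactly `y_1, …, y_{deg_G x_i}`. -/
def ferrers {n m : ℕ} (E : Finset (Fin n × Fin m)) : Finset (Fin n × Fin m) :=
  Finset.univ.filter fun p => (p.2 : ℕ) < degG E p.1

/-- The independence complex of the bipartite graph `E` (faces are the subsets
of `X ⊔ Y` containing no edge), i.e. the Stanley–Reisner complex `Δ(I)` of the
edge ideal `I` of `E`. -/
def indepComplex {n m : ℕ} (E : Finset (Fin n × Fin m)) : SimpComplex (Fin (n + m)) where
  faces := {F | ∀ p ∈ E, ¬(xVert p.1 ∈ F ∧ yVert p.2 ∈ F)}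
  down_closed := fun _ hF _ hG p hp hc => hF p hp ⟨hG hc.1, hG hc.2⟩

/-- The subset `X' ⊔ Y'` of the vertex set `X ⊔ Y = Fin (n + m)`. -/
def vset {n m : ℕ} (X' : Finset (Fin n)) (Y' : Finset (Fin m)) : Finset (Fin (n + m)) :=
  X'.image xVert ∪ Y'.image yVert

/-- The `ℤ^n`-graded Betti number `β_{i,X',•}(I)` of the edge ideal `I` of the
bipartite graph `E`, in the grading with `deg x_i = e_i` and `deg y_j = 0`:
it is the sum of the fine graded Betti numbers `β_{i, X' ⊔ Y'}(I)` over all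
`Y' ⊆ Y`. -/
noncomputable def bettiCoarse (k : Type*) [Field k] {n m : ℕ}
    (E : Finset (Fin n × Fin m)) (i : ℕ) (X' : Finset (Fin n)) : ℕ :=
  ∑ Y' : Finset (Fin m), bettiFine k (indepComplex E) i (vset X' Y')

/-- The binomial coefficient `C(a, b)` with an integer lower argument, which is
zero when `b < 0`. -/
def chooseInt (a : ℕ) (b : ℤ) : ℕ := if 0 ≤ b then a.choose b.toNat else 0

/-- The independence complex (Stanley–Reisner complex of the edge ideal) of an
arbitrary (not necessarily bipartite) graph on `Fin N`, with each edge recorded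
as an increasing pair. -/
def indepComplexGen {N : ℕ} (K : Finset (Fin N × Fin N)) : SimpComplex (Fin N) where
  faces := {F | ∀ p ∈ K, ¬(p.1 ∈ F ∧ p.2 ∈ F)}
  down_closed := fun _ hF _ hG p hp hc => hF p hp ⟨hG hc.1, hG hc.2⟩

/-- `K` is a colexsegment of 2-subsets: each edge is recorded as an increasing
pair, and `K` is an initial segment in the colex order, where
`{a₁ < b₁} <_colex {a₂ < b₂}` iff `b₁ < b₂`, or `b₁ = b₂` and `a₁ < a₂`.
The corresponding colexsegment-generated ideal is
`(x_a x_b : (a, b) ∈ K)`. -/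
def IsColexSegment {N : ℕ} (K : Finset (Fin N × Fin N)) : Prop :=
  (∀ p ∈ K, p.1 < p.2) ∧
    ∀ p ∈ K, ∀ q : Fin N × Fin N, q.1 < q.2 →
      (q.2 < p.2 ∨ (q.2 = p.2 ∧ q.1 < p.1)) → q ∈ K

/-!
By Hochster's formula, Betti numbers are sums of reduced Betti numbers of induced subcomplexes of
the independence complex; both sides are compared with a sum of binomial coefficients over edges.

*Colexsegments.* Let `w` be the largest vertex of `W`. Modulo the star of `w`, which is
contractible, the homology of the complex induced on `W` is generated by faces outside the star,
and the colex order forces these to be the single vertices `a` with `(a, w) ∈ K`. Counting the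
possible `W` gives `β_i(J) ≤ ∑ C(b - 1, i)` over the edges `(a, b) ∈ K`, with vertices numbered
from `0`.

*Bipartite graphs.* Collect the multidegrees `X ⊔ Y` with the same `X`, and let `x₀ ∈ X` have
minimal degree `d`. The exact sequences `H̃_{j+1}(Δ) → H̃_j(link y) → H̃_j(Δ \ y)` allow one to
discard a vertex `y ∉ N(x₀)` together with its neighbors in `X`, until the rest of `X` is
completely joined to `N(x₀)`. Complexes of complete bipartite graphs are disconnected, and so the
multidegrees over `X` contribute at least `C(d, i + 2 - |X|)` to `β_i(I)`. Order the vertices of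
the first side by decreasing degree `d_0 ≥ d_1 ≥ ⋯` and sum over the largest index `r` in `X`;
Vandermonde's identity then yields `β_i(I) ≥ ∑_r ∑_{c < d_r} C(r + c, i)`, the Betti number of a
Ferrers graph.

*Comparison.* The pairs `(r, r + c + 1)` are distinct, and among all sets of that many pairs a
colexsegment minimizes every monotone weight of the larger entry.
-/

section Subquotient

variable {k A A₁ A₂ A₃ : Type*} [DivisionRing k] [AddCommGroup A] [Module k A]
  [AddCommGroup A₁] [Module k A₁] [AddCommGroup A₂] [Module k A₂] [AddCommGroup A₃] [Module k A₃]

/-- The subquotient `Z / (B ∩ Z)` of a module; for `B ≤ Z` this is cycles modulo boundaries. -/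
abbrev Subquotient (Z B : Submodule k A) : Type _ := Z ⧸ B.submoduleOf Z

/-- An injective linear map induces an isomorphism of subquotients with its image. -/
noncomputable def Subquotient.equivMapOfInjective (e : A →ₗ[k] A₂) (he : Function.Injective e)
    (Z B : Submodule k A) : Subquotient Z B ≃ₗ[k] Subquotient (Z.map e) (B.map e) :=
  Submodule.Quotient.equiv _ _ (Submodule.equivMapOfInjective e he Z) <| by
    ext y
    obtain ⟨x, rfl⟩ := (Submodule.equivMapOfInjective e he Z).surjective y
    simp [Submodule.submoduleOf, Submodule.mem_map_equiv, he.eq_iff]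

theorem Subquotient.finrank_le_add_of_exact [FiniteDimensional k A₁] [FiniteDimensional k A₂]
    [FiniteDimensional k A₃] {Z₁ B₁ : Submodule k A₁} {Z₂ B₂ : Submodule k A₂}
    {Z₃ B₃ : Submodule k A₃} (f : A₁ →ₗ[k] A₂) (g : A₂ →ₗ[k] A₃)
    (hfZ : ∀ x ∈ Z₁, f x ∈ Z₂) (hfB : B₁ ≤ B₂.comap f)
    (hgZ : ∀ x ∈ Z₂, g x ∈ Z₃) (hgB : B₂ ≤ B₃.comap g)
    (hexact : ∀ z ∈ Z₂, g z ∈ B₃ → ∃ x ∈ Z₁, f x = z) :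
    Module.finrank k (Subquotient Z₂ B₂) ≤
      Module.finrank k (Subquotient Z₁ B₁) + Module.finrank k (Subquotient Z₃ B₃) := by
  let α : Subquotient Z₁ B₁ →ₗ[k] Subquotient Z₂ B₂ :=
    Submodule.mapQ _ _ (f.restrict hfZ) fun _ hx => hfB hx
  let β : Subquotient Z₂ B₂ →ₗ[k] Subquotient Z₃ B₃ :=
    Submodule.mapQ _ _ (g.restrict hgZ) fun _ hx => hgB hx
  have ker_le_range : LinearMap.ker β ≤ LinearMap.range α := by
    intro q hq
    obtain ⟨z, rfl⟩ := Submodule.Quotient.mk_surjective _ q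
    have hz : g.restrict hgZ z ∈ B₃.submoduleOf Z₃ := (Submodule.Quotient.mk_eq_zero _).1 hq
    obtain ⟨x, hx, hxz⟩ := hexact z z.2 hz
    exact ⟨Submodule.Quotient.mk ⟨x, hx⟩, congrArg Submodule.Quotient.mk (Subtype.ext hxz)⟩
  calc Module.finrank k (Subquotient Z₂ B₂)
      = Module.finrank k (LinearMap.ker β) + Module.finrank k (LinearMap.range β) := by
        rw [add_comm, β.finrank_range_add_finrank_ker]
    _ ≤ Module.finrank k (LinearMap.range α) + Module.finrank k (Subquotient Z₃ B₃) :=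
        add_le_add (Submodule.finrank_mono ker_le_range) (Submodule.finrank_le _)
    _ ≤ _ := add_le_add_left α.finrank_range_le _

theorem Subquotient.finrank_le_of_inf_ker_le [FiniteDimensional k A] [FiniteDimensional k A₂]
    {Z B : Submodule k A} (φ : A →ₗ[k] A₂) (h : Z ⊓ LinearMap.ker φ ≤ B) :
    Module.finrank k (Subquotient Z B) ≤ Module.finrank k A₂ := by
  have ker_le : LinearMap.ker (φ.domRestrict Z) ≤ B.submoduleOf Z := fun z hz => h ⟨z.2, hz⟩
  calc Module.finrank k (Subquotient Z B)
      ≤ Module.finrank k (Z ⧸ LinearMap.ker (φ.domRestrict Z)) :=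
        LinearMap.finrank_le_finrank_of_surjective (Submodule.factor_surjective ker_le)
    _ = Module.finrank k (LinearMap.range (φ.domRestrict Z)) :=
        (φ.domRestrict Z).quotKerEquivRange.finrank_eq
    _ ≤ Module.finrank k A₂ := Submodule.finrank_le _

theorem Subquotient.finrank_pos [FiniteDimensional k A] {Z B : Submodule k A} {z : A} (hz : z ∈ Z)
    (hzB : z ∉ B) : 0 < Module.finrank k (Subquotient Z B) :=
  Module.finrank_pos_iff_exists_ne_zero.2
    ⟨Submodule.Quotient.mk ⟨z, hz⟩, fun h =>
      hzB ((Submodule.Quotient.mk_eq_zero (B.submoduleOf Z)).1 h)⟩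

end Subquotient

namespace SimpComplex

section ExteriorAlgebra

variable {V R : Type*} [LinearOrder V] [CommRing R]

variable (R) in
/-- The sign `(-1) ^ #{w ∈ G | w < v}` with which the vertex `v` enters the face `G`. -/
def insertionSign (v : V) (G : Finset V) : R :=
  (-1) ^ #{w ∈ G | w < v}

lemma insertionSign_mul_self (v : V) (G : Finset V) :
    insertionSign R v G * insertionSign R v G = 1 := by
  simp [insertionSign, ← mul_pow]

lemma insertionSign_insert_self (v : V) (G : Finset V) :
    insertionSign R v (insert v G) = insertionSign R v G := by
  simp [insertionSign, filter_insert]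

lemma insertionSign_erase_self (v : V) (G : Finset V) :
    insertionSign R v (G.erase v) = insertionSign R v G := by
  simp [insertionSign, filter_erase]

lemma insertionSign_insert {u v : V} {G : Finset V} (hu : u ∉ G) :
    insertionSign R v (insert u G) = (if u < v then -1 else 1) * insertionSign R v G := by
  unfold insertionSign
  rw [filter_insert]
  split_ifs
  · rw [card_insert_of_notMem (by simp [hu]), pow_succ']
  · rw [one_mul]

lemma insertionSign_mul_insertionSign_insert {u v : V} {G : Finset V} (huv : u ≠ v)
    (hu : u ∉ G) (hv : v ∉ G) :
    insertionSign R u G * insertionSign R v (insert u G) =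
      -(insertionSign R v G * insertionSign R u (insert v G)) := by
  rw [insertionSign_insert hu, insertionSign_insert hv]
  rcases lt_or_gt_of_ne huv with h | h <;> simp [h, h.not_gt] <;> ring

lemma insertionSign_insert_mul_insertionSign_insert {u v : V} {G : Finset V} (huv : u ≠ v)
    (hu : u ∉ G) (hv : v ∉ G) :
    insertionSign R u (insert v G) * insertionSign R v (insert u G) =
      -(insertionSign R u G * insertionSign R v G) := by
  rw [insertionSign_insert hu, insertionSign_insert hv]
  rcases lt_or_gt_of_ne huv with h | h <;> simp [h, h.not_gt]

variable (R) in
/-- Contraction by the vertex `v` on the exterior algebra over `V`, whose elements are encoded by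
their coefficients on the monomials `F : Finset V`. -/
def contract (v : V) : (Finset V → R) →ₗ[R] (Finset V → R) where
  toFun f G := if v ∈ G then 0 else insertionSign R v G * f (insert v G)
  map_add' f g := by ext G; by_cases h : v ∈ G <;> simp [h, mul_add]
  map_smul' a f := by ext G; by_cases h : v ∈ G <;> simp [h, mul_left_comm]

variable (R) in
/-- Left multiplication by the vertex `v` on the exterior algebra over `V`, in the encoding of
`contract`. -/
def wedge (v : V) : (Finset V → R) →ₗ[R] (Finset V → R) where
  toFun f G := if v ∈ G then insertionSign R v G * f (G.erase v) else 0
  map_add' f g := by ext G; by_cases h : v ∈ G <;> simp [h, mul_add]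
  map_smul' a f := by ext G; by_cases h : v ∈ G <;> simp [h, mul_left_comm]

variable {u v : V} {f : Finset V → R} {G : Finset V}

lemma contract_apply_of_mem (hv : v ∈ G) : contract R v f G = 0 :=
  if_pos hv

lemma contract_apply_of_notMem (hv : v ∉ G) :
    contract R v f G = insertionSign R v G * f (insert v G) :=
  if_neg hv

lemma wedge_apply_of_mem (hv : v ∈ G) :
    wedge R v f G = insertionSign R v G * f (G.erase v) :=
  if_pos hv

lemma wedge_apply_of_notMem (hv : v ∉ G) : wedge R v f G = 0 :=
  if_neg hv

lemma wedge_apply_insert (hv : v ∉ G) :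
    wedge R v f (insert v G) = insertionSign R v G * f G := by
  rw [wedge_apply_of_mem (mem_insert_self v G), insertionSign_insert_self, erase_insert hv]

lemma contract_eq_zero (h : ∀ F, v ∈ F → f F = 0) : contract R v f = 0 := by
  ext G
  by_cases hv : v ∈ G
  · exact contract_apply_of_mem hv
  · simp [contract_apply_of_notMem hv, h]

variable (f)

lemma contract_contract_self (v : V) : contract R v (contract R v f) = 0 :=
  contract_eq_zero fun _ => contract_apply_of_mem

lemma contract_contract_anticomm (u v : V) :
    contract R u (contract R v f) + contract R v (contract R u f) = 0 := by
  rcases eq_or_ne u v with rfl | huv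
  · simp [contract_contract_self]
  ext G
  by_cases hu : u ∈ G
  · simp [contract, hu]
  by_cases hv : v ∈ G
  · simp [contract, hv]
  have hu' : u ∉ insert v G := by simp [huv, hu]
  have hv' : v ∉ insert u G := by simp [huv.symm, hv]
  rw [Pi.add_apply, contract_apply_of_notMem hu, contract_apply_of_notMem hv',
    contract_apply_of_notMem hv, contract_apply_of_notMem hu', ← mul_assoc, ← mul_assoc,
    insertionSign_mul_insertionSign_insert huv hu hv, insert_comm u v, neg_mul, neg_add_cancel,
    Pi.zero_apply]

lemma contract_wedge_add_wedge_contract_self (v : V) :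
    contract R v (wedge R v f) + wedge R v (contract R v f) = f := by
  ext G
  by_cases hv : v ∈ G
  · simp [contract, wedge, hv, insertionSign_erase_self, ← mul_assoc, insertionSign_mul_self]
  · simp [contract, wedge, hv, insertionSign_insert_self, ← mul_assoc, insertionSign_mul_self]

lemma contract_wedge_add_wedge_contract_of_ne (huv : u ≠ v) :
    contract R u (wedge R v f) + wedge R v (contract R u f) = 0 := by
  ext G
  by_cases hu : u ∈ G
  · simp [contract, wedge, hu, huv]
  by_cases hv : v ∈ G
  · obtain ⟨H, hvH, rfl⟩ : ∃ H, v ∉ H ∧ insert v H = G :=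
      ⟨G.erase v, notMem_erase v G, insert_erase hv⟩
    have huH : u ∉ H := fun h => hu (mem_insert_of_mem h)
    have hvuH : v ∉ insert u H := by simp [huv.symm, hvH]
    rw [Pi.add_apply, contract_apply_of_notMem hu, insert_comm u v, wedge_apply_insert hvuH,
      wedge_apply_insert hvH, contract_apply_of_notMem huH, ← mul_assoc,
      insertionSign_insert_mul_insertionSign_insert huv huH hvH, Pi.zero_apply]
    ring
  · simp [contract, wedge, hv, huv.symm]

variable [Fintype V]

variable (V R) in
/-- The boundary operator of the full simplex on `V`; it restricts to the boundary operator of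
every simplicial complex on `V`. -/
def simplexBoundary : (Finset V → R) →ₗ[R] (Finset V → R) := ∑ v, contract R v

lemma simplexBoundary_eq_sum : simplexBoundary V R f = ∑ v, contract R v f := by
  simp [simplexBoundary]

lemma simplexBoundary_apply (G : Finset V) :
    simplexBoundary V R f G = ∑ v ∈ univ \ G, insertionSign R v G * f (insert v G) := by
  rw [simplexBoundary_eq_sum, Finset.sum_apply]
  symm
  refine sum_subset_zero_on_sdiff (subset_univ _) (fun v hv => ?_) fun v hv => ?_
  · exact contract_apply_of_mem (by simpa using hv)
  · exact (contract_apply_of_notMem (by simpa using hv)).symm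

lemma simplexBoundary_apply_empty : simplexBoundary V R f ∅ = ∑ v, f {v} := by
  simp [simplexBoundary_apply, insertionSign]

lemma simplexBoundary_simplexBoundary : simplexBoundary V R (simplexBoundary V R f) = 0 := by
  simp only [simplexBoundary_eq_sum, map_sum]
  rw [← sum_product']
  -- Pair `(u, v)` with `(v, u)`: the diagonal terms vanish by themselves.
  refine sum_involution (fun p _ => p.swap) (fun p _ => contract_contract_anticomm f _ _) ?_
    (fun _ _ => mem_univ _) fun p _ => p.swap_swap
  rintro ⟨u, v⟩ _ hne hswap
  obtain rfl : v = u := congrArg Prod.fst hswap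
  exact hne (contract_contract_self f v)

lemma simplexBoundary_wedge (v : V) :
    simplexBoundary V R (wedge R v f) = f - wedge R v (simplexBoundary V R f) := by
  rw [eq_sub_iff_add_eq]
  simp only [simplexBoundary_eq_sum, map_sum, ← sum_add_distrib]
  rw [sum_eq_single v (fun u _ => contract_wedge_add_wedge_contract_of_ne f) (by simp),
    contract_wedge_add_wedge_contract_self]

lemma simplexBoundary_contract (v : V) :
    simplexBoundary V R (contract R v f) = -contract R v (simplexBoundary V R f) := by
  rw [eq_neg_iff_add_eq_zero]
  simp only [simplexBoundary_eq_sum, map_sum, ← sum_add_distrib]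
  exact sum_eq_zero fun u _ => contract_contract_anticomm f u v

end ExteriorAlgebra

section Chains

variable {V R : Type*} [CommRing R] {K L : SimpComplex V} {c : ℕ} {f : Finset V → R}

variable (R) in
/-- The chains of `K` on faces of cardinality `c`, extended by zero to all finite sets of vertices,
so that the chains of all complexes on `V` live in one module. -/
def chainSpace (K : SimpComplex V) (c : ℕ) : Submodule R (Finset V → R) where
  carrier := {f | Function.support f ⊆ {F | F ∈ K.faces ∧ #F = c}}
  zero_mem' := by simp
  add_mem' hf hg := (Function.support_add _ _).trans (Set.union_subset hf hg)
  smul_mem' a f hf := (Function.support_const_smul_subset a f).trans hf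

lemma mem_chainSpace_iff :
    f ∈ chainSpace R K c ↔ ∀ F, f F ≠ 0 → F ∈ K.faces ∧ #F = c :=
  Iff.rfl

lemma chainSpace_mono (h : K.faces ⊆ L.faces) (c : ℕ) : chainSpace R K c ≤ chainSpace R L c :=
  fun _ hf _ hF => ⟨h (hf hF).1, (hf hF).2⟩

variable [LinearOrder V]

/-- The link of the vertex `v` in `K`. -/
def link (K : SimpComplex V) (v : V) : SimpComplex V where
  faces := {F | v ∉ F ∧ insert v F ∈ K.faces}
  down_closed _ hF _ hGF :=
    ⟨fun hv => hF.1 (hGF hv), K.down_closed _ hF.2 _ (insert_subset_insert _ hGF)⟩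

lemma faces_link_subset (K : SimpComplex V) (v : V) : (K.link v).faces ⊆ K.faces :=
  fun F hF => K.down_closed _ hF.2 _ (subset_insert v F)

lemma contract_mem_chainSpace_link (hf : f ∈ chainSpace R K (c + 1)) (v : V) :
    contract R v f ∈ chainSpace R (K.link v) c := by
  refine mem_chainSpace_iff.2 fun F hF => ?_
  have hv : v ∉ F := fun hv => hF (contract_apply_of_mem hv)
  rw [contract_apply_of_notMem hv] at hF
  obtain ⟨hface, hcard⟩ := mem_chainSpace_iff.1 hf _ (right_ne_zero_of_mul hF)
  rw [card_insert_of_notMem hv] at hcard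
  exact ⟨⟨hv, hface⟩, Nat.succ_injective hcard⟩

lemma wedge_mem_chainSpace {v : V} (hf : ∀ F, v ∉ F → f F ≠ 0 → insert v F ∈ K.faces ∧ #F = c) :
    wedge R v f ∈ chainSpace R K (c + 1) := by
  refine mem_chainSpace_iff.2 fun F hF => ?_
  have hv : v ∈ F := by
    by_contra hv
    exact hF (wedge_apply_of_notMem hv)
  rw [wedge_apply_of_mem hv] at hF
  obtain ⟨hface, hcard⟩ := hf _ (notMem_erase v F) (right_ne_zero_of_mul hF)
  rw [insert_erase hv] at hface
  exact ⟨hface, by rw [← hcard, card_erase_add_one hv]⟩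

variable [Fintype V]

lemma simplexBoundary_mem_chainSpace (hf : f ∈ chainSpace R K (c + 1)) :
    simplexBoundary V R f ∈ chainSpace R K c := by
  rw [simplexBoundary_eq_sum]
  exact Submodule.sum_mem _ fun v _ =>
    chainSpace_mono (faces_link_subset K v) c (contract_mem_chainSpace_link hf v)

variable (R) in
/-- The cycles of `K` on faces of cardinality `c`, as elements of `chainSpace`. -/
def cycleSpace (K : SimpComplex V) (c : ℕ) : Submodule R (Finset V → R) :=
  chainSpace R K c ⊓ LinearMap.ker (simplexBoundary V R)

variable (R) in
/-- The boundaries of `K` on faces of cardinality `c`, as elements of `chainSpace`. -/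
def boundarySpace (K : SimpComplex V) (c : ℕ) : Submodule R (Finset V → R) :=
  (chainSpace R K (c + 1)).map (simplexBoundary V R)

lemma cycleSpace_mono (h : K.faces ⊆ L.faces) (c : ℕ) : cycleSpace R K c ≤ cycleSpace R L c :=
  inf_le_inf_right _ (chainSpace_mono h c)

lemma boundarySpace_mono (h : K.faces ⊆ L.faces) (c : ℕ) :
    boundarySpace R K c ≤ boundarySpace R L c :=
  Submodule.map_mono (chainSpace_mono h (c + 1))

lemma contract_mem_cycleSpace_link (hf : f ∈ cycleSpace R K (c + 1)) (v : V) :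
    contract R v f ∈ cycleSpace R (K.link v) c := by
  refine ⟨contract_mem_chainSpace_link hf.1 v, LinearMap.mem_ker.2 ?_⟩
  rw [simplexBoundary_contract, LinearMap.mem_ker.1 hf.2, map_zero, neg_zero]

lemma contract_mem_boundarySpace_link (hf : f ∈ boundarySpace R K (c + 1)) (v : V) :
    contract R v f ∈ boundarySpace R (K.link v) c := by
  obtain ⟨g, hg, rfl⟩ := hf
  refine ⟨-contract R v g, neg_mem (contract_mem_chainSpace_link hg v), ?_⟩
  rw [map_neg, simplexBoundary_contract, neg_neg]

end Chains

section Extension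

variable {V k : Type*} [Field k]

variable (k) in
/-- Extension by zero of a simplicial chain, identifying `Chains k K c` with `chainSpace k K c`. -/
noncomputable def extendChain (K : SimpComplex V) (c : ℕ) : Chains k K c →ₗ[k] (Finset V → k) :=
  Function.ExtendByZero.linearMap k (Subtype.val : Face K c → Finset V)

lemma extendChain_of_face {K : SimpComplex V} {c : ℕ} (x : Chains k K c) {F : Finset V}
    (hF : F ∈ K.faces ∧ #F = c) : extendChain k K c x F = x ⟨F, hF⟩ :=
  Subtype.val_injective.extend_apply x (0 : Finset V → k) ⟨F, hF⟩

lemma extendChain_of_not_face {K : SimpComplex V} {c : ℕ} (x : Chains k K c) {F : Finset V}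
    (hF : ¬(F ∈ K.faces ∧ #F = c)) : extendChain k K c x F = 0 :=
  Function.extend_apply' x (0 : Finset V → k) F fun ⟨G, hG⟩ => hF (hG ▸ G.2)

lemma extendChain_injective (K : SimpComplex V) (c : ℕ) :
    Function.Injective (extendChain k K c) :=
  Function.extend_injective Subtype.val_injective (0 : Finset V → k)

lemma range_extendChain (K : SimpComplex V) (c : ℕ) :
    LinearMap.range (extendChain k K c) = chainSpace k K c := by
  ext f
  refine ⟨?_, fun hf => ⟨fun F => f F.1, ?_⟩⟩
  · rintro ⟨x, rfl⟩ F hF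
    by_contra h
    exact hF (extendChain_of_not_face x h)
  · ext F
    by_cases h : F ∈ K.faces ∧ #F = c
    · rw [extendChain_of_face _ h]
    · rw [extendChain_of_not_face _ h, Function.notMem_support.1 (mt (@hf F) h)]

end Extension

section Homology

variable {V k : Type*} [LinearOrder V] [Fintype V] [Field k]

lemma simplexBoundary_extendChain (K : SimpComplex V) (c : ℕ) (x : Chains k K (c + 1)) :
    simplexBoundary V k (extendChain k K (c + 1) x) = extendChain k K c (boundary k K c x) := by
  ext G
  by_cases hG : G ∈ K.faces ∧ #G = c
  · rw [extendChain_of_face _ hG, simplexBoundary_apply, ← sum_attach]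
    refine sum_congr rfl fun v _ => ?_
    have hv : v.1 ∉ G := (mem_sdiff.1 v.2).2
    by_cases h : insert v.1 G ∈ K.faces
    · rw [extendChain_of_face _ ⟨h, by rw [card_insert_of_notMem hv, hG.2]⟩, dif_pos h]
      rfl
    · rw [extendChain_of_not_face _ fun h' => h h'.1, dif_neg h, mul_zero]
  · rw [extendChain_of_not_face _ hG]
    by_contra h
    have hx : extendChain k K (c + 1) x ∈ chainSpace k K (c + 1) :=
      range_extendChain (k := k) K (c + 1) ▸ ⟨x, rfl⟩
    exact hG (simplexBoundary_mem_chainSpace hx h)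

lemma map_extendChain_ker_boundary (K : SimpComplex V) (c : ℕ) :
    (LinearMap.ker (boundary k K c)).map (extendChain k K (c + 1)) = cycleSpace k K (c + 1) := by
  have ker_boundary : LinearMap.ker (boundary k K c) =
      (LinearMap.ker (simplexBoundary V k)).comap (extendChain k K (c + 1)) := by
    ext x
    rw [Submodule.mem_comap, LinearMap.mem_ker, LinearMap.mem_ker, simplexBoundary_extendChain,
      map_eq_zero_iff _ (extendChain_injective K c)]
  rw [ker_boundary, Submodule.map_comap_eq, range_extendChain, cycleSpace]

lemma map_extendChain_range_boundary (K : SimpComplex V) (c : ℕ) :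
    (LinearMap.range (boundary k K c)).map (extendChain k K c) = boundarySpace k K c := by
  rw [boundarySpace, ← range_extendChain, ← LinearMap.range_comp, ← LinearMap.range_comp]
  exact congrArg LinearMap.range (LinearMap.ext fun x => (simplexBoundary_extendChain K c x).symm)

theorem reducedBetti_eq_finrank (K : SimpComplex V) (j : ℕ) :
    reducedBetti k K j =
      Module.finrank k (Subquotient (cycleSpace k K (j + 1)) (boundarySpace k K (j + 1))) := by
  rw [← map_extendChain_ker_boundary, ← map_extendChain_range_boundary]
  exact (Subquotient.equivMapOfInjective _ (extendChain_injective K (j + 1)) _ _).finrank_eq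

/-- Modulo the contractible star of `w`, homology is generated by the faces outside the star. -/
theorem reducedBetti_le_card (K : SimpComplex V) (w : V) (j : ℕ) (S : Finset (Finset V))
    (hS : ∀ F ∈ K.faces, #F = j + 1 → w ∉ F → insert w F ∉ K.faces → F ∈ S) :
    reducedBetti k K j ≤ #S := by
  have star_cycle_le : cycleSpace k K (j + 1) ⊓
      LinearMap.ker (LinearMap.funLeft k k ((↑) : S → Finset V)) ≤ boundarySpace k K (j + 1) := by
    rintro f ⟨⟨hf, hcycle⟩, hfS⟩
    refine ⟨wedge k w f, wedge_mem_chainSpace fun F hwF hfF => ⟨?_, (hf hfF).2⟩, ?_⟩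
    · by_contra hins
      exact hfF (congrFun hfS ⟨F, hS F (hf hfF).1 (hf hfF).2 hwF hins⟩)
    · rw [simplexBoundary_wedge, LinearMap.mem_ker.1 hcycle, map_zero, sub_zero]
  simpa [reducedBetti_eq_finrank] using Subquotient.finrank_le_of_inf_ker_le _ star_cycle_le

/-- This is the exactness of `H̃_{j+1}(K) → H̃_j(link v) → H̃_j(K \ v)`, whose connecting map is
contraction by `v`. -/
theorem reducedBetti_link_le (K : SimpComplex V) (v : V) (j : ℕ) :
    reducedBetti k (K.link v) j ≤
      reducedBetti k K (j + 1) + reducedBetti k (K.induced {v}ᶜ) j := by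
  have link_subset : (K.link v).faces ⊆ (K.induced {v}ᶜ).faces := fun F hF =>
    ⟨faces_link_subset K v hF, fun u hu => by
      rw [mem_compl, mem_singleton]
      exact fun huv => hF.1 (huv ▸ hu)⟩
  have deletion_subset : (K.induced {v}ᶜ).faces ⊆ K.faces := fun _ hF => hF.1
  have contract_deletion {c : ℕ} {f : Finset V → k} (hf : f ∈ chainSpace k (K.induced {v}ᶜ) c) :
      contract k v f = 0 := by
    refine contract_eq_zero fun F hvF => ?_
    by_contra hfF
    simpa using (hf hfF).1.2 hvF
  simp only [reducedBetti_eq_finrank]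
  refine Subquotient.finrank_le_add_of_exact (contract k v) LinearMap.id
    (fun f hf => contract_mem_cycleSpace_link hf v)
    (fun f hf => contract_mem_boundarySpace_link hf v)
    (cycleSpace_mono link_subset _) (boundarySpace_mono link_subset _) ?_
  rintro z ⟨hz, hcycle⟩ ⟨u, hu, huz : simplexBoundary V k u = z⟩
  have hwedge : wedge k v z ∈ chainSpace k K (j + 2) :=
    wedge_mem_chainSpace fun F _ hF => ⟨(hz hF).1.2, (hz hF).2⟩
  have hu' : u ∈ chainSpace k K (j + 2) := chainSpace_mono deletion_subset _ hu
  refine ⟨wedge k v z - u, ⟨sub_mem hwedge hu', LinearMap.mem_ker.2 ?_⟩, ?_⟩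
  · rw [map_sub, simplexBoundary_wedge, LinearMap.mem_ker.1 hcycle, map_zero, sub_zero, huz,
      sub_self]
  · have hz0 : contract k v z = 0 := contract_deletion (chainSpace_mono link_subset _ hz)
    have key := contract_wedge_add_wedge_contract_self z v
    rw [hz0, map_zero, add_zero] at key
    rw [map_sub, key, contract_deletion hu, sub_zero]

end Homology

section Disconnected

variable {V R : Type*} [LinearOrder V] [Fintype V] [CommRing R] {K : SimpComplex V} {P : V → Prop}

/-- After restricting `f` to the faces inside `P`, this is `∂∂ = 0` at the empty face. -/
lemma sum_simplexBoundary_apply_singleton_of_separated [DecidablePred P] {f : Finset V → R}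
    (hf : f ∈ chainSpace R K 2) (hK : ∀ F ∈ K.faces, ∀ u ∈ F, ∀ v ∈ F, P u → P v) :
    ∑ v with P v, simplexBoundary V R f {v} = 0 := by
  let fP : Finset V → R := fun F => if ∃ u ∈ F, P u then f F else 0
  have boundary_fP (v : V) :
      simplexBoundary V R fP {v} = if P v then simplexBoundary V R f {v} else 0 := by
    simp only [simplexBoundary_apply, fP]
    split_ifs with hv
    · exact sum_congr rfl fun w _ => by rw [if_pos ⟨v, by simp, hv⟩]
    · refine sum_eq_zero fun w _ => ?_
      split_ifs with hw
      · obtain ⟨u, hu, hPu⟩ := hw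
        have : f (insert w {v}) = 0 := by
          by_contra hne
          exact hv (hK _ (hf hne).1 u hu v (by simp) hPu)
        rw [this, mul_zero]
      · rw [mul_zero]
  calc ∑ v with P v, simplexBoundary V R f {v}
      = ∑ v, simplexBoundary V R fP {v} := by simp only [boundary_fP, sum_filter]
    _ = 0 := by
      rw [← simplexBoundary_apply_empty, simplexBoundary_simplexBoundary, Pi.zero_apply]

lemma single_sub_single_mem_cycleSpace {a b : V} (ha : {a} ∈ K.faces) (hb : {b} ∈ K.faces) :
    (Pi.single {a} 1 - Pi.single {b} 1 : Finset V → R) ∈ cycleSpace R K 1 := by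
  have single_mem {v : V} (hv : {v} ∈ K.faces) :
      (Pi.single {v} 1 : Finset V → R) ∈ chainSpace R K 1 := by
    refine mem_chainSpace_iff.2 fun F hF => ?_
    obtain rfl : F = {v} := by
      by_contra hne
      exact hF (Pi.single_eq_of_ne hne 1)
    exact ⟨hv, card_singleton v⟩
  have hmem := sub_mem (single_mem ha) (single_mem hb)
  refine ⟨hmem, LinearMap.mem_ker.2 (funext fun F => ?_)⟩
  by_contra hF
  obtain rfl : F = ∅ := card_eq_zero.1 (simplexBoundary_mem_chainSpace hmem hF).2
  refine hF ?_
  simp [simplexBoundary_apply_empty, Pi.single_apply]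

theorem one_le_reducedBetti_zero_of_separated {k : Type*} [Field k] {a b : V}
    (ha : {a} ∈ K.faces) (hb : {b} ∈ K.faces) (hPa : P a) (hPb : ¬P b)
    (hK : ∀ F ∈ K.faces, ∀ u ∈ F, ∀ v ∈ F, P u → P v) : 1 ≤ reducedBetti k K 0 := by
  classical
  rw [reducedBetti_eq_finrank]
  refine Subquotient.finrank_pos (single_sub_single_mem_cycleSpace ha hb) ?_
  rintro ⟨f, hf, hfz⟩
  have hsum := sum_simplexBoundary_apply_singleton_of_separated hf hK
  rw [hfz] at hsum
  simp [Pi.single_apply, hPa, hPb] at hsum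

end Disconnected

section Induced

variable {V : Type*} {K : SimpComplex V}

lemma faces_injective : Function.Injective (faces : SimpComplex V → Set (Finset V)) := by
  rintro ⟨s, _⟩ ⟨t, _⟩ rfl
  rfl

variable [LinearOrder V] {v : V} {W : Finset V}

lemma link_induced_insert : (K.induced (insert v W)).link v = (K.link v).induced W := by
  refine faces_injective (Set.ext fun F => ⟨?_, ?_⟩)
  · rintro ⟨hvF, hK, hsub⟩
    exact ⟨⟨hvF, hK⟩, (insert_subset_insert_iff hvF).1 hsub⟩
  · rintro ⟨⟨hvF, hK⟩, hsub⟩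
    exact ⟨hvF, hK, insert_subset_insert v hsub⟩

lemma induced_insert_induced_compl [Fintype V] (hv : v ∉ W) :
    (K.induced (insert v W)).induced {v}ᶜ = K.induced W := by
  refine faces_injective (Set.ext fun F => ⟨?_, ?_⟩)
  · rintro ⟨⟨hK, hsub⟩, hcompl⟩
    exact ⟨hK, (subset_insert_iff_of_notMem fun h => by simpa using hcompl h).1 hsub⟩
  · rintro ⟨hK, hsub⟩
    exact ⟨⟨hK, hsub.trans (subset_insert v W)⟩, fun u hu => by
      simpa using ne_of_mem_of_not_mem (hsub hu) hv⟩

theorem reducedBetti_link_induced_le [Fintype V] {k : Type*} [Field k] (K : SimpComplex V)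
    (hv : v ∉ W) (j : ℕ) :
    reducedBetti k ((K.link v).induced W) j ≤
      reducedBetti k (K.induced (insert v W)) (j + 1) + reducedBetti k (K.induced W) j := by
  simpa only [link_induced_insert, induced_insert_induced_compl hv] using
    reducedBetti_link_le (k := k) (K.induced (insert v W)) v j

end Induced

end SimpComplex

section Bipartite

variable {n m : ℕ} {E : Finset (Fin n × Fin m)} {A X : Finset (Fin n)} {Y : Finset (Fin m)}

lemma xVert_injective : Function.Injective (xVert : Fin n → Fin (n + m)) :=
  Fin.castAdd_injective n m

lemma yVert_injective : Function.Injective (yVert : Fin m → Fin (n + m)) :=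
  Fin.natAdd_injective m n

lemma xVert_ne_yVert (i : Fin n) (j : Fin m) : xVert i ≠ yVert j :=
  Fin.ne_of_lt (i.2.trans_le (Nat.le_add_right n j))

lemma xVert_mem_vset {i : Fin n} : xVert i ∈ vset X Y ↔ i ∈ X := by
  simp [vset, xVert_injective.eq_iff, (xVert_ne_yVert _ _).symm]

lemma yVert_mem_vset {j : Fin m} : yVert j ∈ vset X Y ↔ j ∈ Y := by
  simp [vset, yVert_injective.eq_iff, xVert_ne_yVert]

lemma forall_fin_add_iff {P : Fin (n + m) → Prop} :
    (∀ v, P v) ↔ (∀ i, P (xVert i)) ∧ ∀ j, P (yVert j) :=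
  ⟨fun h => ⟨fun _ => h _, fun _ => h _⟩, fun h v => Fin.addCases h.1 h.2 v⟩

lemma subset_vset_iff {F : Finset (Fin (n + m))} :
    F ⊆ vset X Y ↔ (∀ i, xVert i ∈ F → i ∈ X) ∧ ∀ j, yVert j ∈ F → j ∈ Y := by
  simp only [subset_iff, forall_fin_add_iff, xVert_mem_vset, yVert_mem_vset]

lemma vset_insert_right (j : Fin m) : vset X (insert j Y) = insert (yVert j) (vset X Y) := by
  rw [vset, image_insert, union_insert, vset]

lemma card_vset (X : Finset (Fin n)) (Y : Finset (Fin m)) : #(vset X Y) = #X + #Y := by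
  rw [vset, card_union_of_disjoint, card_image_of_injective _ xVert_injective,
    card_image_of_injective _ yVert_injective]
  simp [disjoint_left, (xVert_ne_yVert _ _).symm]

lemma vset_bijective :
    Function.Bijective (fun p : Finset (Fin n) × Finset (Fin m) => vset p.1 p.2) := by
  refine (Fintype.bijective_iff_injective_and_card _).2 ⟨?_, by simp [pow_add]⟩
  rintro ⟨X, Y⟩ ⟨X', Y'⟩ (h : vset X Y = vset X' Y')
  ext i
  · rw [← xVert_mem_vset (Y := Y), h, xVert_mem_vset]
  · rw [← yVert_mem_vset (X := X), h, yVert_mem_vset]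

lemma mem_nbr {i : Fin n} {j : Fin m} : j ∈ nbr E i ↔ (i, j) ∈ E := by
  simp [nbr]

lemma sum_degG (E : Finset (Fin n × Fin m)) : ∑ i, degG E i = #E := by
  simp only [degG, nbr, card_filter]
  rw [← Fintype.sum_prod_type (f := fun p => if p ∈ E then 1 else 0)]
  simp

variable (k : Type*) [Field k]

lemma totalBetti_eq_sum_bettiCoarse (E : Finset (Fin n × Fin m)) (i : ℕ) :
    totalBetti k (indepComplex E) i = ∑ X : Finset (Fin n), bettiCoarse k E i X := by
  simp only [totalBetti, bettiCoarse]
  rw [← Fintype.sum_prod_type', vset_bijective.sum_comp (bettiFine k (indepComplex E) i)]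

lemma insert_yVert_mem_faces_iff {y : Fin m} {F : Finset (Fin (n + m))} :
    insert (yVert y) F ∈ (indepComplex E).faces ↔
      F ∈ (indepComplex E).faces ∧ ∀ i, xVert i ∈ F → (i, y) ∉ E := by
  constructor
  · exact fun hF => ⟨(indepComplex E).down_closed _ hF _ (subset_insert _ F), fun i hi hE =>
      hF (i, y) hE ⟨mem_insert_of_mem hi, mem_insert_self _ F⟩⟩
  · rintro ⟨hF, hy⟩ ⟨i, j⟩ hE ⟨hi, hj⟩
    have hiF : xVert i ∈ F := mem_of_mem_insert_of_ne hi (xVert_ne_yVert i y)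
    rcases mem_insert.1 hj with hjy | hjF
    · exact hy i hiF (yVert_injective hjy ▸ hE)
    · exact hF (i, j) hE ⟨hiF, hjF⟩

lemma link_yVert_induced_vset {y : Fin m} (hy : y ∉ Y) :
    ((indepComplex E).link (yVert y)).induced (vset A Y) =
      (indepComplex E).induced (vset {i ∈ A | (i, y) ∉ E} Y) := by
  refine faces_injective (Set.ext fun F => ⟨?_, ?_⟩)
  · rintro ⟨⟨-, hins⟩, hsub⟩
    obtain ⟨hF, hFy⟩ := insert_yVert_mem_faces_iff.1 hins
    obtain ⟨hFA, hFY⟩ := subset_vset_iff.1 hsub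
    exact ⟨hF, subset_vset_iff.2 ⟨fun i hi => mem_filter.2 ⟨hFA i hi, hFy i hi⟩, hFY⟩⟩
  · rintro ⟨hF, hsub⟩
    obtain ⟨hFA, hFY⟩ := subset_vset_iff.1 hsub
    exact ⟨⟨fun h => hy (hFY y h),
        insert_yVert_mem_faces_iff.2 ⟨hF, fun i hi => (mem_filter.1 (hFA i hi)).2⟩⟩,
      subset_vset_iff.2 ⟨fun i hi => (mem_filter.1 (hFA i hi)).1, hFY⟩⟩

lemma one_le_reducedBetti_complete (hX : X.Nonempty) (hY : Y.Nonempty) (hE : X ×ˢ Y ⊆ E) :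
    1 ≤ reducedBetti k ((indepComplex E).induced (vset X Y)) 0 := by
  obtain ⟨a, ha⟩ := hX
  obtain ⟨b, hb⟩ := hY
  refine one_le_reducedBetti_zero_of_separated (P := fun v => ∃ i, v = xVert i)
    (a := xVert a) (b := yVert b) ⟨?_, ?_⟩ ⟨?_, ?_⟩ ⟨a, rfl⟩ ?_ ?_
  · simp [indepComplex, (xVert_ne_yVert _ _).symm]
  · simpa using xVert_mem_vset.2 ha
  · simp [indepComplex, xVert_ne_yVert]
  · simpa using yVert_mem_vset.2 hb
  · rintro ⟨i, h⟩
    exact xVert_ne_yVert _ _ h.symm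
  · rintro F ⟨hF, hFW⟩ _ hi v hv ⟨i, rfl⟩
    obtain ⟨hFX, hFY⟩ := subset_vset_iff.1 hFW
    revert v
    refine forall_fin_add_iff.2 ⟨fun i' _ => ⟨i', rfl⟩, fun j hj => ?_⟩
    exact (hF (i, j) (hE (mk_mem_product (hFX i hi) (hFY j hj))) ⟨hi, hj⟩).elim

/-- The sum over `Y' ⊆ Y` of the Betti numbers of the edge ideal of `E` in multidegree `X ⊔ Y'` and
homological degree `|X| + q - 2`. -/
noncomputable def strandSum (E : Finset (Fin n × Fin m)) (q : ℕ) (X : Finset (Fin n))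
    (Y : Finset (Fin m)) : ℕ :=
  ∑ Y' ∈ Y.powerset,
    if q ≤ #Y' then reducedBetti k ((indepComplex E).induced (vset X Y')) (#Y' - q) else 0

lemma bettiCoarse_eq_strandSum {i : ℕ} (hX : #X ≤ i + 2) :
    bettiCoarse k E i X = strandSum k E (i + 2 - #X) X univ := by
  rw [bettiCoarse, strandSum, powerset_univ]
  refine sum_congr rfl fun Y' _ => ?_
  rw [bettiFine, card_vset, show #X + #Y' - i - 2 = #Y' - (i + 2 - #X) by omega]
  exact if_congr (by omega) rfl rfl

lemma strandSum_filter_le_strandSum_insert (q : ℕ) (X : Finset (Fin n)) {y : Fin m} (hy : y ∉ Y) :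
    strandSum k E q {i ∈ X | (i, y) ∉ E} Y ≤ strandSum k E q X (insert y Y) := by
  rw [strandSum, strandSum, sum_powerset_insert hy, ← sum_add_distrib]
  refine sum_le_sum fun Y' hY' => ?_
  have hyY' : y ∉ Y' := fun h => hy (mem_powerset.1 hY' h)
  rw [card_insert_of_notMem hyY']
  by_cases hq : q ≤ #Y'
  · rw [if_pos hq, if_pos hq, if_pos (by omega), Nat.sub_add_comm hq, add_comm (reducedBetti k _ _),
      ← link_yVert_induced_vset hyY', vset_insert_right]
    exact reducedBetti_link_induced_le _ (mt yVert_mem_vset.1 hyY') _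
  · simp [hq]

lemma strandSum_filter_disjoint_le (q : ℕ) {T : Finset (Fin m)} (hT : Disjoint T Y) :
    ∀ X, strandSum k E q {i ∈ X | Disjoint (nbr E i) T} Y ≤ strandSum k E q X (T ∪ Y) := by
  induction T using Finset.induction_on with
  | empty => simp
  | insert y T hyT ih =>
    intro X
    obtain ⟨hyY, hTY⟩ := disjoint_insert_left.1 hT
    have filter_insert_eq : {i ∈ X | Disjoint (nbr E i) (insert y T)} =
        {i ∈ {i ∈ X | (i, y) ∉ E} | Disjoint (nbr E i) T} := by
      simp only [filter_filter, disjoint_insert_right, mem_nbr]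
    calc strandSum k E q {i ∈ X | Disjoint (nbr E i) (insert y T)} Y
        ≤ strandSum k E q {i ∈ X | (i, y) ∉ E} (T ∪ Y) := filter_insert_eq ▸ ih hTY _
      _ ≤ strandSum k E q X (insert y (T ∪ Y)) :=
        strandSum_filter_le_strandSum_insert k q X (by simp [hyT, hyY])
      _ = strandSum k E q X (insert y T ∪ Y) := by rw [insert_union]

lemma choose_le_strandSum_of_complete {q : ℕ} (hq : 1 ≤ q) (hX : X.Nonempty) (hE : X ×ˢ Y ⊆ E) :
    (#Y).choose q ≤ strandSum k E q X Y := by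
  rw [← card_powersetCard, card_eq_sum_ones, powersetCard_eq_filter, sum_filter]
  refine sum_le_sum fun Y' hY' => ?_
  split_ifs with hcard hle
  · have hY'ne : Y'.Nonempty := card_pos.1 (by omega)
    rw [hcard, Nat.sub_self]
    exact one_le_reducedBetti_complete k hX hY'ne
      ((product_subset_product_right (mem_powerset.1 hY')).trans hE)
  all_goals omega

/-- Discarding the vertices outside `N(x₀)` leaves the vertices of `X` whose neighborhood lies
inside `N(x₀)`; by minimality of the degree these are completely joined to `N(x₀)`. -/
theorem choose_le_bettiCoarse {i : ℕ} (hX : #X ≤ i + 1) {x₀ : Fin n} (hx₀ : x₀ ∈ X)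
    (hmin : ∀ x ∈ X, degG E x₀ ≤ degG E x) :
    (degG E x₀).choose (i + 2 - #X) ≤ bettiCoarse k E i X := by
  let X₀ : Finset (Fin n) := {x ∈ X | Disjoint (nbr E x) (nbr E x₀)ᶜ}
  have hX₀ : x₀ ∈ X₀ := mem_filter.2 ⟨hx₀, disjoint_compl_right⟩
  have complete : X₀ ×ˢ nbr E x₀ ⊆ E := by
    rintro ⟨x, y⟩ hxy
    obtain ⟨hx, hy⟩ := mem_product.1 hxy
    obtain ⟨hxX, hdisj⟩ := mem_filter.1 hx
    have nbr_eq : nbr E x = nbr E x₀ :=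
      eq_of_subset_of_card_le (disjoint_compl_right_iff.1 hdisj) (hmin x hxX)
    exact mem_nbr.1 (nbr_eq ▸ hy)
  calc (degG E x₀).choose (i + 2 - #X)
      ≤ strandSum k E (i + 2 - #X) X₀ (nbr E x₀) :=
        choose_le_strandSum_of_complete k (by omega) ⟨x₀, hX₀⟩ complete
    _ ≤ strandSum k E (i + 2 - #X) X ((nbr E x₀)ᶜ ∪ nbr E x₀) :=
        strandSum_filter_disjoint_le k _ disjoint_compl_left X
    _ = bettiCoarse k E i X := by
        rw [bettiCoarse_eq_strandSum k (by omega), union_comm, union_compl]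

end Bipartite

section Ferrers

lemma sum_powerset_eq_sum_max {α M : Type*} [LinearOrder α] [AddCommMonoid M] (s : Finset α)
    (f : Finset α → M) :
    ∑ t ∈ s.powerset, f t = f ∅ + ∑ a ∈ s, ∑ t ∈ {x ∈ s | x < a}.powerset, f (insert a t) := by
  induction s using Finset.induction_on_max with
  | empty => simp
  | insert b s hb ih =>
    have hbs : b ∉ s := fun h => (hb b h).false
    have below_b : {x ∈ insert b s | x < b} = s := by
      rw [filter_insert, if_neg (lt_irrefl b), filter_true_of_mem hb]
    have below_mem : ∑ a ∈ s, ∑ t ∈ {x ∈ insert b s | x < a}.powerset, f (insert a t) =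
        ∑ a ∈ s, ∑ t ∈ {x ∈ s | x < a}.powerset, f (insert a t) :=
      sum_congr rfl fun a ha => by rw [filter_insert, if_neg (hb a ha).not_gt]
    rw [sum_powerset_insert hbs, sum_insert hbs, below_b, below_mem, ih]
    abel

lemma sum_choose_mul_choose_eq (r l i : ℕ) :
    ∑ t ∈ range (i + 1), r.choose t * l.choose (i + 1 - t) =
      ∑ c ∈ range l, (r + c).choose i := by
  induction l with
  | zero =>
    refine sum_eq_zero fun t ht => ?_
    have ht : t < i + 1 := mem_range.1 ht
    rw [Nat.choose_eq_zero_of_lt (Nat.sub_pos_of_lt ht), mul_zero]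
  | succ l ih =>
    rw [sum_range_succ _ l, ← ih, Nat.add_choose_eq,
      Nat.sum_antidiagonal_eq_sum_range_succ_mk, ← sum_add_distrib]
    refine sum_congr rfl fun t ht => ?_
    obtain ⟨s, rfl⟩ := Nat.exists_eq_add_of_le (Nat.lt_succ_iff.1 (mem_range.1 ht))
    rw [add_assoc, Nat.add_sub_cancel_left, Nat.add_sub_cancel_left, Nat.choose_succ_succ]
    ring

variable (k : Type*) [Field k] {n m : ℕ} (E : Finset (Fin n × Fin m))

lemma sum_range_choose_le_sum_bettiCoarse (i : ℕ) {σ : Equiv.Perm (Fin n)}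
    (hσ : Antitone fun r => degG E (σ r)) (r : Fin n) :
    ∑ c ∈ range (degG E (σ r)), ((r : ℕ) + c).choose i ≤
      ∑ T ∈ (Iio r).powerset, bettiCoarse k E i ((insert r T).map σ.toEmbedding) := by
  have choose_le {t : ℕ} (ht : t ∈ range (i + 1)) {T : Finset (Fin n)}
      (hT : T ∈ powersetCard t (Iio r)) : (degG E (σ r)).choose (i + 1 - t) ≤
        bettiCoarse k E i ((insert r T).map σ.toEmbedding) := by
    obtain ⟨hTr, rfl⟩ := mem_powersetCard.1 hT
    have hrT : r ∉ T := fun h => (mem_Iio.1 (hTr h)).false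
    have hcard : #((insert r T).map σ.toEmbedding) = #T + 1 := by
      rw [card_map, card_insert_of_notMem hrT]
    have hmin : ∀ x ∈ (insert r T).map σ.toEmbedding, degG E (σ r) ≤ degG E x := by
      refine forall_mem_map.2 ((forall_mem_insert _ _ _).2 ⟨le_rfl, fun s hs => ?_⟩)
      exact hσ (mem_Iio.1 (hTr hs)).le
    have hle : #((insert r T).map σ.toEmbedding) ≤ i + 1 := by
      rw [hcard]
      exact mem_range.1 ht
    have key := choose_le_bettiCoarse k hle (mem_map_of_mem _ (mem_insert_self r T)) hmin
    rwa [hcard, show i + 2 - (#T + 1) = i + 1 - #T by omega] at key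
  calc ∑ c ∈ range (degG E (σ r)), ((r : ℕ) + c).choose i
      = ∑ t ∈ range (i + 1), (r : ℕ).choose t * (degG E (σ r)).choose (i + 1 - t) :=
        (sum_choose_mul_choose_eq r _ i).symm
    _ = ∑ t ∈ range (i + 1), ∑ _T ∈ powersetCard t (Iio r),
          (degG E (σ r)).choose (i + 1 - t) := by simp
    _ ≤ ∑ t ∈ range (i + 1), ∑ T ∈ powersetCard t (Iio r),
          bettiCoarse k E i ((insert r T).map σ.toEmbedding) :=
        sum_le_sum fun t ht => sum_le_sum fun T hT => choose_le ht hT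
    _ ≤ _ := by
        simp only [powersetCard_eq_filter]
        exact sum_fiberwise_le_sum_of_sum_fiber_nonneg fun _ _ => Nat.zero_le _

/-- The left-hand side is the `i`-th Betti number of the Ferrers graph with row lengths
`degG E (σ r)`, with one summand for each of its edges. -/
theorem sum_ferrers_le_totalBetti (i : ℕ) {σ : Equiv.Perm (Fin n)}
    (hσ : Antitone fun r => degG E (σ r)) :
    ∑ r : Fin n, ∑ c ∈ range (degG E (σ r)), ((r : ℕ) + c).choose i ≤
      totalBetti k (indepComplex E) i := by
  calc ∑ r : Fin n, ∑ c ∈ range (degG E (σ r)), ((r : ℕ) + c).choose i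
      ≤ ∑ r : Fin n, ∑ T ∈ (Iio r).powerset,
          bettiCoarse k E i ((insert r T).map σ.toEmbedding) :=
        sum_le_sum fun r _ => sum_range_choose_le_sum_bettiCoarse k E i hσ r
    _ ≤ ∑ X : Finset (Fin n), bettiCoarse k E i (X.map σ.toEmbedding) := by
        rw [← powerset_univ, sum_powerset_eq_sum_max]
        simp only [filter_gt_eq_Iio]
        exact Nat.le_add_left _ _
    _ = totalBetti k (indepComplex E) i := by
        rw [totalBetti_eq_sum_bettiCoarse]
        exact σ.finsetCongr.sum_comp (bettiCoarse k E i)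

end Ferrers

section Colex

lemma sum_le_sum_of_exchange {ι M : Type*} [DecidableEq ι] [AddCommMonoid M] [LinearOrder M]
    [IsOrderedAddMonoid M] {s t : Finset ι} {f : ι → M} (hcard : #s ≤ #t)
    (hexchange : ∀ i ∈ s \ t, ∀ j ∈ t \ s, f i ≤ f j) (hf : ∀ j ∈ t \ s, 0 ≤ f j) :
    ∑ i ∈ s, f i ≤ ∑ j ∈ t, f j := by
  have hcard' : #(s \ t) ≤ #(t \ s) := card_sdiff_le_card_sdiff_iff.2 hcard
  suffices ∑ i ∈ s \ t, f i ≤ ∑ j ∈ t \ s, f j by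
    rw [← sum_inter_add_sum_sdiff s t, ← sum_inter_add_sum_sdiff t s, inter_comm t s]
    gcongr
  rcases (t \ s).eq_empty_or_nonempty with hts | hts
  · rw [hts, card_empty, Nat.le_zero, card_eq_zero] at hcard'
    rw [hts, hcard']
  obtain ⟨j₀, hj₀, hmin⟩ := exists_min_image (t \ s) f hts
  calc ∑ i ∈ s \ t, f i
      ≤ #(s \ t) • f j₀ := sum_le_card_nsmul _ _ _ fun i hi => hexchange i hi j₀ hj₀
    _ ≤ #(t \ s) • f j₀ := nsmul_le_nsmul_left (hf j₀ hj₀) hcard'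
    _ ≤ ∑ j ∈ t \ s, f j := card_nsmul_le_sum _ _ _ hmin

variable {N : ℕ} {K : Finset (Fin N × Fin N)}

theorem IsColexSegment.sum_le_sum {M : Type*} [AddCommMonoid M] [LinearOrder M]
    [IsOrderedAddMonoid M] (hK : IsColexSegment K) {g : ℕ → M} (hg : Monotone g)
    (hg₀ : ∀ b, 0 ≤ g b) {T : Finset (ℕ × ℕ)} (hT : ∀ p ∈ T, p.1 < p.2) (hcard : #K ≤ #T) :
    ∑ p ∈ K, g p.2 ≤ ∑ p ∈ T, g p.2 := by
  let ψ : Fin N × Fin N ↪ ℕ × ℕ := Fin.valEmbedding.prodMap Fin.valEmbedding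
  have larger_le : ∀ p ∈ K.map ψ \ T, ∀ q ∈ T \ K.map ψ, p.2 ≤ q.2 := by
    intro p hp q hq
    obtain ⟨p, hpK, rfl⟩ := mem_map.1 (mem_sdiff.1 hp).1
    obtain ⟨hqT, hqK⟩ := mem_sdiff.1 hq
    by_contra! hlt
    have hqN : q.2 < N := hlt.trans p.2.isLt
    have hqlt : q.1 < q.2 := hT q hqT
    exact hqK (mem_map.2 ⟨(⟨q.1, hqlt.trans hqN⟩, ⟨q.2, hqN⟩),
      hK.2 p hpK _ hqlt (Or.inl hlt), rfl⟩)
  calc ∑ p ∈ K, g p.2 = ∑ p ∈ K.map ψ, g p.2 := (sum_map K ψ fun p => g p.2).symm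
    _ ≤ ∑ p ∈ T, g p.2 := sum_le_sum_of_exchange (by rwa [card_map])
        (fun p hp q hq => hg (larger_le p hp q hq)) fun _ _ => hg₀ _

lemma IsColexSegment.sum_choose_le_sum_ferrers {n : ℕ} (hK : IsColexSegment K) {d : Fin n → ℕ}
    (hcard : #K ≤ ∑ r, d r) (i : ℕ) :
    ∑ p ∈ K, ((p.2 : ℕ) - 1).choose i ≤
      ∑ r : Fin n, ∑ c ∈ range (d r), ((r : ℕ) + c).choose i := by
  let cells : Finset (Σ _ : Fin n, ℕ) := univ.sigma fun r => range (d r)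
  let toPair : (Σ _ : Fin n, ℕ) ↪ ℕ × ℕ :=
    ⟨fun p => (p.1, p.1 + p.2 + 1), by
      rintro ⟨r, c⟩ ⟨r', c'⟩ h
      simp only [Prod.mk.injEq] at h
      obtain rfl : r = r' := Fin.ext h.1
      obtain rfl : c = c' := by omega
      rfl⟩
  have toPair_lt : ∀ p ∈ cells.map toPair, p.1 < p.2 :=
    forall_mem_map.2 fun p _ => Nat.lt_succ_of_le (Nat.le_add_right _ _)
  have choose_mono : Monotone fun b : ℕ => (b - 1).choose i := fun _ _ h =>
    Nat.choose_le_choose i (Nat.sub_le_sub_right h 1)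
  calc ∑ p ∈ K, ((p.2 : ℕ) - 1).choose i
      ≤ ∑ p ∈ cells.map toPair, (p.2 - 1).choose i :=
        hK.sum_le_sum choose_mono (fun _ => Nat.zero_le _) toPair_lt (by simpa [cells] using hcard)
    _ = ∑ r : Fin n, ∑ c ∈ range (d r), ((r : ℕ) + c).choose i := by
        rw [sum_map, sum_sigma]
        rfl

/-- If `(a, w)` is an edge, then so are all pairs of vertices below `w`, which precede it in the
colex order. -/
lemma IsColexSegment.exists_eq_singleton (hK : IsColexSegment K) {F : Finset (Fin N)} {w : Fin N}
    (hF : F ∈ (indepComplexGen K).faces) (hFw : ∀ x ∈ F, x < w)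
    (hins : insert w F ∉ (indepComplexGen K).faces) : ∃ a, (a, w) ∈ K ∧ F = {a} := by
  obtain ⟨⟨a, b⟩, habK, ha, hb⟩ : ∃ p ∈ K, p.1 ∈ insert w F ∧ p.2 ∈ insert w F := by
    by_contra! h
    exact hins fun p hp hmem => h p hp hmem.1 hmem.2
  have hab : a < b := hK.1 _ habK
  have hle_w : ∀ x ∈ insert w F, x ≤ w :=
    (forall_mem_insert _ _ _).2 ⟨le_rfl, fun x hx => (hFw x hx).le⟩
  have haF : a ∈ F := mem_of_mem_insert_of_ne ha (hab.trans_le (hle_w b hb)).ne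
  obtain rfl : b = w := by
    by_contra hbw
    exact hF _ habK ⟨haF, mem_of_mem_insert_of_ne hb hbw⟩
  refine ⟨a, habK, eq_singleton_iff_unique_mem.2 ⟨haF, fun c hc => ?_⟩⟩
  rcases lt_trichotomy c a with hca | hca | hac
  · exact (hF (c, a) (hK.2 _ habK (c, a) hca (Or.inl hab)) ⟨hc, haF⟩).elim
  · exact hca
  · exact (hF (a, c) (hK.2 _ habK (a, c) hac (Or.inl (hFw c hc))) ⟨haF, hc⟩).elim

open scoped Classical in
lemma bettiFine_indepComplexGen_le (k : Type*) [Field k] (hK : IsColexSegment K) (i : ℕ)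
    (W : Finset (Fin N)) :
    bettiFine k (indepComplexGen K) i W ≤
      #{p ∈ K | p.1 ∈ W ∧ IsGreatest (W : Set (Fin N)) p.2 ∧ #W = i + 2} := by
  rw [bettiFine]
  split_ifs with hW
  · obtain ⟨w, hw⟩ : ∃ w, IsGreatest (W : Set (Fin N)) w :=
      ⟨_, W.isGreatest_max' (card_pos.1 (by omega))⟩
    refine (reducedBetti_le_card _ w _ (image (fun p => {p.1}) _) ?_).trans card_image_le
    rintro F ⟨hF, hFW⟩ hcard hwF hins
    have hFw : ∀ x ∈ F, x < w := fun x hx =>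
      lt_of_le_of_ne (hw.2 (hFW hx)) (ne_of_mem_of_not_mem hx hwF)
    obtain ⟨a, haK, rfl⟩ := hK.exists_eq_singleton hF hFw fun h =>
      hins ⟨h, insert_subset hw.1 hFW⟩
    rw [card_singleton] at hcard
    exact mem_image.2 ⟨(a, w), mem_filter.2 ⟨haK, singleton_subset_iff.1 hFW, hw, by omega⟩, rfl⟩
  · exact Nat.zero_le _

open scoped Classical in
lemma card_filter_isGreatest_le {a b : Fin N} (hab : a < b) (i : ℕ) :
    #{W : Finset (Fin N) | a ∈ W ∧ IsGreatest (W : Set (Fin N)) b ∧ #W = i + 2} ≤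
      ((b : ℕ) - 1).choose i := by
  have hcard : #((Iio b).erase a) = (b : ℕ) - 1 := by
    rw [card_erase_of_mem (mem_Iio.2 hab), Fin.card_Iio]
  rw [← hcard, ← card_powersetCard]
  refine (card_le_card fun W hW => ?_).trans
    (card_image_le (f := fun U : Finset (Fin N) => insert b (insert a U)))
  obtain ⟨ha, ⟨hb, hle⟩, hW⟩ := (mem_filter.1 hW).2
  have ha' : a ∈ W.erase b := mem_erase.2 ⟨hab.ne, ha⟩
  refine mem_image.2 ⟨(W.erase b).erase a, mem_powersetCard.2 ⟨?_, ?_⟩, ?_⟩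
  · refine erase_subset_erase a fun x hx => ?_
    exact mem_Iio.2 (lt_of_le_of_ne (hle (mem_of_mem_erase hx)) (ne_of_mem_erase hx))
  · rw [card_erase_of_mem ha', card_erase_of_mem hb, hW]
    rfl
  · rw [insert_erase ha', insert_erase hb]

theorem totalBetti_indepComplexGen_le (k : Type*) [Field k] (hK : IsColexSegment K) (i : ℕ) :
    totalBetti k (indepComplexGen K) i ≤ ∑ p ∈ K, ((p.2 : ℕ) - 1).choose i := by
  classical
  calc totalBetti k (indepComplexGen K) i
      ≤ ∑ W : Finset (Fin N), #{p ∈ K | p.1 ∈ W ∧ IsGreatest (W : Set (Fin N)) p.2 ∧ #W = i + 2} :=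
        sum_le_sum fun W _ => bettiFine_indepComplexGen_le k hK i W
    _ = ∑ p ∈ K, #{W : Finset (Fin N) |
          p.1 ∈ W ∧ IsGreatest (W : Set (Fin N)) p.2 ∧ #W = i + 2} :=
        sum_card_bipartiteAbove_eq_sum_card_bipartiteBelow _
    _ ≤ ∑ p ∈ K, ((p.2 : ℕ) - 1).choose i :=
        sum_le_sum fun p hp => card_filter_isGreatest_le (hK.1 p hp) i

end Colex

theorem edge_ideal_satisfies_colex_lower_bound_general (k : Type*) [Field k]
    {n m N : ℕ} {E : Finset (Fin n × Fin m)} {K : Finset (Fin N × Fin N)}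
    (hK : IsColexSegment K) (hcard : #K ≤ #E) (j : ℕ) :
    totalBetti k (indepComplexGen K) j ≤ totalBetti k (indepComplex E) j := by
  obtain ⟨σ, hσ⟩ : ∃ σ : Equiv.Perm (Fin n), Antitone fun r => degG E (σ r) :=
    ⟨Tuple.sort (OrderDual.toDual ∘ degG E), Tuple.monotone_sort (OrderDual.toDual ∘ degG E)⟩
  have sum_degG_perm : ∑ r, degG E (σ r) = #E := (Equiv.sum_comp σ (degG E)).trans (sum_degG E)
  calc totalBetti k (indepComplexGen K) j
      ≤ ∑ p ∈ K, ((p.2 : ℕ) - 1).choose j := totalBetti_indepComplexGen_le k hK j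
    _ ≤ ∑ r : Fin n, ∑ c ∈ range (degG E (σ r)), ((r : ℕ) + c).choose j :=
        hK.sum_choose_le_sum_ferrers (hcard.trans_eq sum_degG_perm.symm) j
    _ ≤ totalBetti k (indepComplex E) j := sum_ferrers_le_totalBetti k E j hσ

/-- **Theorem.**  Let `G` be a bipartite graph.  Then the edge ideal `I` of `G`
satisfies the colex lower bound: if `J` is the colexsegment-generated ideal in
degree 2 with the same number of minimal generators as `I`, then
`β_j(I) ≥ β_j(J)` for all `j`. -/
theorem edge_ideal_satisfies_colex_lower_bound (k : Type*) [Field k]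
    (n m N : ℕ) (E : Finset (Fin n × Fin m)) (K : Finset (Fin N × Fin N))
    (hK : IsColexSegment K) (hcard : K.card = E.card) (j : ℕ) :
    totalBetti k (indepComplexGen K) j ≤ totalBetti k (indepComplex E) j :=
  edge_ideal_satisfies_colex_lower_bound_general k hK hcard.le j
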